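/- Let r ≥ 2 and d ≥ 1 be integers and let G be a finite simple graph on n ≥ 1 vertices such that every depth-(r−1) topological minor of G has edge density at most d. Then G admits a block vertex ordering of r-admissibility at most 6r²d³ and length at most ⌊log₂ n⌋ + 1. -/

import Mathlib

/-- `BConnGE G S u r m` holds if there is a family of `m` paths in `G`, each of length at
most `r`, starting in `u`, ending in a vertex of `S` different from `u`, with all internal
vertices outside `S`, and pairwise sharing only the vertex `u`. -/
def BConnGE {V : Type} (G : SimpleGraph V) (S : Set V) (u : V) (r m : ℕ) : Prop :=
  ∃ (t : Fin m → V) (P : ∀ i, G.Walk u (t i)),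
    (∀ i, (P i).IsPath) ∧
    (∀ i, (P i).length ≤ r) ∧
    (∀ i, t i ∈ S ∧ t i ≠ u) ∧
    (∀ i, ∀ w ∈ (P i).support, w ≠ u → w ≠ t i → w ∉ S) ∧
    (∀ i j, i ≠ j → ∀ w ∈ (P i).support, w ∈ (P j).support → w = u)

/-- The back-connectivity `bconn_r(S,u)`: the maximum cardinality of a family of paths as in
`BConnGE`. -/
noncomputable def bconn {V : Type} (G : SimpleGraph V) (S : Set V) (u : V) (r : ℕ) : ℕ :=
  sSup {m : ℕ | BConnGE G S u r m}

/-- `G` admits a depth-`r` topological minor `H` (witnessed by a topological minor model: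
branch vertices `f` and internally disjoint paths of length at most `2r+1` for the edges
of `H`, internally avoiding all branch vertices) whose edge density `|E(H)|/|V(H)|`
is strictly larger than `d`. -/
def HasDepthTopMinorDensityGT {V : Type} (G : SimpleGraph V) (r : ℕ) (d : ℝ) : Prop :=
  ∃ (m : ℕ) (H : SimpleGraph (Fin m)),
    0 < m ∧
    d < (H.edgeSet.ncard : ℝ) / (m : ℝ) ∧
    ∃ (f : Fin m → V) (P : ∀ (a b : Fin m), a < b → H.Adj a b → G.Walk (f a) (f b)),
      Function.Injective f ∧
      (∀ (a b : Fin m) (hab : a < b) (h : H.Adj a b), (P a b hab h).IsPath) ∧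
      (∀ (a b : Fin m) (hab : a < b) (h : H.Adj a b), (P a b hab h).length ≤ 2 * r + 1) ∧
      (∀ (a b : Fin m) (hab : a < b) (h : H.Adj a b),
        ∀ w ∈ (P a b hab h).support, w ≠ f a → w ≠ f b → ∀ c : Fin m, w ≠ f c) ∧
      (∀ (a b : Fin m) (hab : a < b) (h : H.Adj a b)
         (a' b' : Fin m) (hab' : a' < b') (h' : H.Adj a' b'), (a, b) ≠ (a', b') →
        ∀ w ∈ (P a b hab h).support, w ∈ (P a' b' hab' h').support → w = f a ∨ w = f b)

/-- `a` and `b` are joined by a walk all of whose other vertices lie in `I`. -/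
def ConnIn {V : Type} (G : SimpleGraph V) (a b : V) (I : Finset V) : Prop :=
  ∃ p : G.Walk a b, ∀ w ∈ p.support, w = a ∨ w = b ∨ w ∈ I

theorem ConnIn.symm {V : Type} {G : SimpleGraph V} {a b : V} {I : Finset V}
    (h : ConnIn G a b I) : ConnIn G b a I := by
  obtain ⟨p, hp⟩ := h
  refine ⟨p.reverse, fun w hw => ?_⟩
  rw [SimpleGraph.Walk.support_reverse, List.mem_reverse] at hw
  have := hp w hw
  tauto

theorem ConnIn.trans {V : Type} [DecidableEq V] {G : SimpleGraph V} {a b c : V} {I J : Finset V}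
    (h : ConnIn G a b I) (h' : ConnIn G b c J) (hb : b ∈ I ∪ J) : ConnIn G a c (I ∪ J) := by
  obtain ⟨p, hp⟩ := h
  obtain ⟨q, hq⟩ := h'
  refine ⟨p.append q, fun w hw => ?_⟩
  rw [SimpleGraph.Walk.mem_support_append_iff] at hw
  rcases hw with hw | hw
  · rcases hp w hw with h | h | h
    · exact Or.inl h
    · subst h; exact Or.inr (Or.inr hb)
    · exact Or.inr (Or.inr (Finset.mem_union_left _ h))
  · rcases hq w hw with h | h | h
    · subst h; exact Or.inr (Or.inr hb)
    · exact Or.inr (Or.inl h)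
    · exact Or.inr (Or.inr (Finset.mem_union_right _ h))

/-- A family of links between vertices of `W`, given as (end, end, interior). -/
def GoodFam {V : Type} (G : SimpleGraph V) (W : Finset V) (k : ℕ)
    (F : Finset (V × V × Finset V)) : Prop :=
  (∀ x ∈ F, x.1 ∈ W ∧ x.2.1 ∈ W ∧ x.1 ≠ x.2.1 ∧ x.2.2.card ≤ k ∧ Disjoint x.2.2 W ∧
    ConnIn G x.1 x.2.1 x.2.2) ∧
  (∀ x ∈ F, ∀ y ∈ F, x ≠ y → s(x.1, x.2.1) ≠ s(y.1, y.2.1) ∧ Disjoint x.2.2 y.2.2)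

theorem goodFam_card_le {V : Type} [DecidableEq V] (G : SimpleGraph V) (ρ d : ℕ)
    (hminor : ¬ HasDepthTopMinorDensityGT G ρ (d : ℝ)) (W : Finset V)
    (F : Finset (V × V × Finset V)) (hF : GoodFam G W (2 * ρ) F) : F.card ≤ d * W.card := by
  by_contra hlt
  push Not at hlt
  apply hminor
  obtain ⟨h1, h2⟩ := hF
  have hFne : F.Nonempty := by
    rw [← Finset.card_pos]; omega
  obtain ⟨x0, hx0⟩ := hFne
  have hWpos : 0 < W.card := Finset.card_pos.2 ⟨_, (h1 x0 hx0).1⟩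
  let f : Fin W.card → V := fun i => (W.equivFin.symm i : V)
  have hfinj : Function.Injective f := fun i j h =>
    W.equivFin.symm.injective (Subtype.ext h)
  have hfW : ∀ i, f i ∈ W := fun i => (W.equivFin.symm i).2
  have hfs : ∀ w ∈ W, ∃ i, f i = w := fun w hw => ⟨W.equivFin ⟨w, hw⟩, by simp [f]⟩
  let H : SimpleGraph (Fin W.card) :=
    { Adj := fun a b => ∃ x ∈ F, s(x.1, x.2.1) = s(f a, f b)
      symm := ⟨fun a b ⟨x, hx, h⟩ => ⟨x, hx, by rw [h, Sym2.eq_swap]⟩⟩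
      loopless := ⟨fun a ⟨x, hx, h⟩ => by
        have := (h1 x hx).2.2.1
        rw [Sym2.eq_iff] at h
        rcases h with ⟨h, h'⟩ | ⟨h, h'⟩ <;> exact this (h.trans h'.symm)⟩ }
  have hcard : F.card ≤ H.edgeSet.ncard := by
    have e1 : (F.image (fun x => s(x.1, x.2.1))).card = F.card := by
      apply Finset.card_image_of_injOn
      intro x hx y hy hxy
      by_contra hne
      exact (h2 x hx y hy hne).1 hxy
    rw [← e1, ← Set.ncard_coe_finset]
    refine le_trans (Set.ncard_le_ncard ?_ (Set.toFinite _))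
      (Set.ncard_image_le (f := Sym2.map f) (s := H.edgeSet) (Set.toFinite _))
    intro e he
    simp only [Finset.coe_image, Set.mem_image, Finset.mem_coe] at he
    obtain ⟨x, hx, rfl⟩ := he
    obtain ⟨i, hi⟩ := hfs _ (h1 x hx).1
    obtain ⟨j, hj⟩ := hfs _ (h1 x hx).2.1
    refine ⟨s(i, j), ?_, by simp [hi, hj]⟩
    rw [SimpleGraph.mem_edgeSet]
    exact ⟨x, hx, by rw [hi, hj]⟩
  have hpath : ∀ (a b : Fin W.card) (_ : a < b) (_ : H.Adj a b),
      ∃ (p : G.Walk (f a) (f b)), p.IsPath ∧ p.length ≤ 2 * ρ + 1 ∧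
        ∃ x ∈ F, s(x.1, x.2.1) = s(f a, f b) ∧
          ∀ w ∈ p.support, w = f a ∨ w = f b ∨ w ∈ x.2.2 := by
    intro a b hab ⟨x, hx, hs⟩
    have hc : ConnIn G (f a) (f b) x.2.2 := by
      rcases Sym2.eq_iff.1 hs with ⟨ha, hb⟩ | ⟨ha, hb⟩
      · rw [← ha, ← hb]; exact (h1 x hx).2.2.2.2.2
      · rw [← ha, ← hb]; exact (h1 x hx).2.2.2.2.2.symm
    obtain ⟨p, hp⟩ := hc
    have hsub : ∀ w ∈ p.bypass.support, w = f a ∨ w = f b ∨ w ∈ x.2.2 :=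
      fun w hw => hp w (p.support_bypass_subset_support hw)
    refine ⟨p.bypass, p.bypass_isPath, ?_, x, hx, hs, hsub⟩
    have hnd := p.bypass_isPath.support_nodup
    have : p.bypass.support.toFinset ⊆ insert (f a) (insert (f b) x.2.2) := by
      intro w hw
      simp only [Finset.mem_insert]
      exact hsub w (List.mem_toFinset.1 hw)
    have h3 := Finset.card_le_card this
    rw [List.toFinset_card_of_nodup hnd, SimpleGraph.Walk.length_support] at h3
    have h4 := Finset.card_insert_le (f a) (insert (f b) x.2.2)
    have h5 := Finset.card_insert_le (f b) x.2.2
    have h6 := (h1 x hx).2.2.2.1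
    omega
  choose P hP1 hP2 X hX hXs hXw using hpath
  refine ⟨W.card, H, hWpos, ?_, f, P, hfinj, hP1, hP2, ?_, ?_⟩
  · rw [lt_div_iff₀ (by exact_mod_cast hWpos)]
    exact_mod_cast lt_of_lt_of_le hlt hcard
  · intro a b hab h w hw hwa hwb c hc
    rcases hXw a b hab h w hw with h' | h' | h'
    · exact hwa h'
    · exact hwb h'
    · exact Finset.disjoint_left.1 (h1 _ (hX a b hab h)).2.2.2.2.1 h' (hc ▸ hfW c)
  · intro a b hab h a' b' hab' h' hne w hw hw'
    by_contra hcon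
    push Not at hcon
    have hwI : w ∈ (X a b hab h).2.2 := by
      rcases hXw a b hab h w hw with h' | h' | h'
      · exact absurd h' hcon.1
      · exact absurd h' hcon.2
      · exact h'
    have hwW : w ∉ W := Finset.disjoint_left.1 (h1 _ (hX a b hab h)).2.2.2.2.1 hwI
    have hwI' : w ∈ (X a' b' hab' h').2.2 := by
      rcases hXw a' b' hab' h' w hw' with h' | h' | h'
      · exact absurd (h' ▸ hfW _) hwW
      · exact absurd (h' ▸ hfW _) hwW
      · exact h'
    by_cases hXX : X a b hab h = X a' b' hab' h'
    · have e := hXs a b hab h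
      rw [hXX, hXs a' b' hab' h', Sym2.eq_iff] at e
      rcases e with ⟨e1, e2⟩ | ⟨e1, e2⟩
      · exact hne (by rw [hfinj e1, hfinj e2])
      · have e1 := hfinj e1
        have e2 := hfinj e2
        subst e1 e2
        exact lt_asymm hab hab'
    · exact Finset.disjoint_left.1 (h2 _ (hX a b hab h) _ (hX a' b' hab' h') hXX).2 hwI hwI'

theorem exists_indep {V : Type} [DecidableEq V] (d : ℕ) (F : Finset (V × V × Finset V))
    (N : ℕ) : ∀ (T : Finset V), T.card ≤ N →
    (∀ A ⊆ T, (F.filter (fun x => x.1 ∈ A ∧ x.2.1 ∈ A)).card ≤ d * A.card) →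
    ∃ R ⊆ T, (∀ x ∈ F, x.1 ≠ x.2.1 → x.1 ∈ R → x.2.1 ∉ R) ∧ T.card ≤ (2 * d + 1) * R.card := by
  induction N with
  | zero =>
    intro T hT _
    have : T = ∅ := Finset.card_eq_zero.1 (by omega)
    subst this
    exact ⟨∅, by simp, by simp, by simp⟩
  | succ N ih =>
    intro T hT hA
    rcases T.eq_empty_or_nonempty with rfl | hne
    · exact ⟨∅, by simp, by simp, by simp⟩
    set FT := F.filter (fun x => x.1 ∈ T ∧ x.2.1 ∈ T) with hFT
    have hcount : ∑ v ∈ T, (FT.filter (fun x => x.1 = v ∨ x.2.1 = v)).card ≤ 2 * FT.card := by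
      have := Finset.sum_card_bipartiteAbove_eq_sum_card_bipartiteBelow
        (s := T) (t := FT) (r := fun v x => x.1 = v ∨ x.2.1 = v)
      simp only [Finset.bipartiteAbove, Finset.bipartiteBelow] at this
      rw [this, mul_comm, ← smul_eq_mul]
      apply Finset.sum_le_card_nsmul
      intro x hx
      have : (T.filter (fun v => x.1 = v ∨ x.2.1 = v)) ⊆ {x.1, x.2.1} := by
        intro v hv
        simp only [Finset.mem_filter] at hv
        simp only [Finset.mem_insert, Finset.mem_singleton]
        rcases hv.2 with h | h
        · exact Or.inl h.symm
        · exact Or.inr h.symm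
      exact (Finset.card_le_card this).trans Finset.card_le_two
    have hex : ∃ v ∈ T, (FT.filter (fun x => x.1 = v ∨ x.2.1 = v)).card ≤ 2 * d := by
      by_contra hcon
      push Not at hcon
      have h1 := Finset.sum_lt_sum_of_nonempty hne hcon
      rw [Finset.sum_const, smul_eq_mul] at h1
      have h2 := hA T subset_rfl
      nlinarith
    obtain ⟨v, hv, hdeg⟩ := hex
    set Nv := (FT.filter (fun x => x.1 = v ∨ x.2.1 = v)).image
      (fun x => if x.1 = v then x.2.1 else x.1) with hNv
    have hNc : Nv.card ≤ 2 * d := Finset.card_image_le.trans hdeg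
    set T' := T \ insert v Nv with hT'
    have hsub : T' ⊆ T := Finset.sdiff_subset
    have hvT' : v ∉ T' := by simp [hT']
    have hlt : T'.card < T.card := Finset.card_lt_card ⟨hsub, fun h => hvT' (h hv)⟩
    obtain ⟨R, hR, hind, hc⟩ := ih T' (by omega) (fun A hAT => hA A (hAT.trans hsub))
    have hvR : v ∉ R := fun h => hvT' (hR h)
    refine ⟨insert v R, ?_, ?_, ?_⟩
    · intro w hw
      rcases Finset.mem_insert.1 hw with rfl | hw
      · exact hv
      · exact hsub (hR hw)
    · intro x hx hxne hx1 hx2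
      rcases Finset.mem_insert.1 hx1 with e1 | m1
      · rcases Finset.mem_insert.1 hx2 with e2 | m2
        · exact hxne (e1.trans e2.symm)
        · have hm := hR m2
          rw [hT', Finset.mem_sdiff] at hm
          apply hm.2
          apply Finset.mem_insert_of_mem
          rw [hNv, Finset.mem_image]
          refine ⟨x, ?_, by rw [if_pos e1]⟩
          simp only [hFT, Finset.mem_filter]
          exact ⟨⟨hx, e1 ▸ hv, hm.1⟩, Or.inl e1⟩
      · rcases Finset.mem_insert.1 hx2 with e2 | m2
        · have hm := hR m1
          rw [hT', Finset.mem_sdiff] at hm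
          apply hm.2
          apply Finset.mem_insert_of_mem
          rw [hNv, Finset.mem_image]
          refine ⟨x, ?_, if_neg (fun h : x.1 = v => hvR (h ▸ m1))⟩
          simp only [hFT, Finset.mem_filter]
          exact ⟨⟨hx, hm.1, e2 ▸ hv⟩, Or.inr e2⟩
        · exact hind x hx hxne m1 m2
    · rw [Finset.card_insert_of_notMem hvR]
      have h1 : T.card ≤ T'.card + (insert v Nv).card := by
        rw [hT']
        have := Finset.le_card_sdiff (insert v Nv) T
        omega
      have h2 := Finset.card_insert_le v Nv
      nlinarith

theorem ConnIn.mono {V : Type} {G : SimpleGraph V} {a b : V} {I J : Finset V}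
    (h : ConnIn G a b I) (hIJ : I ⊆ J) : ConnIn G a b J := by
  obtain ⟨p, hp⟩ := h
  refine ⟨p, fun w hw => ?_⟩
  rcases hp w hw with h | h | h
  · exact Or.inl h
  · exact Or.inr (Or.inl h)
  · exact Or.inr (Or.inr (hIJ h))

theorem ConnIn.cons {V : Type} {G : SimpleGraph V} {u v w : V} {I : Finset V} (h : G.Adj u v)
    (hc : ConnIn G v w I) (hv : v ∈ I ∨ v = w) : ConnIn G u w I := by
  obtain ⟨p, hp⟩ := hc
  refine ⟨SimpleGraph.Walk.cons h p, fun z hz => ?_⟩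
  rw [SimpleGraph.Walk.support_cons, List.mem_cons] at hz
  rcases hz with hz | hz
  · exact Or.inl hz
  · rcases hp z hz with h | h | h
    · subst h
      rcases hv with hv | hv
      · exact Or.inr (Or.inr hv)
      · exact Or.inr (Or.inl hv)
    · exact Or.inr (Or.inl h)
    · exact Or.inr (Or.inr h)

theorem walk_first_hit {V : Type} [DecidableEq V] {G : SimpleGraph V} (W : Finset V) {a t : V}
    (p : G.Walk a t) (ht : t ∈ W) :
    ∃ s ∈ W, s ∈ p.support ∧ ∃ I : Finset V, (∀ w ∈ I, w ∈ p.support) ∧ Disjoint I W ∧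
      I.card ≤ p.length ∧ ConnIn G a s I ∧ (∀ w ∈ I, ConnIn G a w I) ∧
      (a ∈ I ∨ (a = s ∧ I = ∅)) := by
  induction p with
  | nil =>
    rename_i u
    exact ⟨u, ht, by simp, ∅, by simp, by simp, by simp, ⟨SimpleGraph.Walk.nil, by simp⟩, by simp,
      Or.inr ⟨rfl, rfl⟩⟩
  | cons h q ih =>
    rename_i u v t
    by_cases hu : u ∈ W
    · exact ⟨u, hu, by simp, ∅, by simp, by simp, by simp, ⟨SimpleGraph.Walk.nil, by simp⟩,
        by simp, Or.inr ⟨rfl, rfl⟩⟩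
    obtain ⟨s, hs, hsq, I, hI, hd, hc, hconn, hconn', hv⟩ := ih ht
    refine ⟨s, hs, by simp [hsq], insert u I, ?_, ?_, ?_, ?_, ?_,
      Or.inl (Finset.mem_insert_self _ _)⟩
    · intro w hw
      rw [SimpleGraph.Walk.support_cons, List.mem_cons]
      rcases Finset.mem_insert.1 hw with h | h
      · exact Or.inl h
      · exact Or.inr (hI w h)
    · rw [Finset.disjoint_insert_left]; exact ⟨hu, hd⟩
    · rw [SimpleGraph.Walk.length_cons]
      exact (Finset.card_insert_le _ _).trans (by omega)
    · exact (hconn.cons h (hv.imp_right And.left)).mono (Finset.subset_insert _ _)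
    · intro w hw
      rcases Finset.mem_insert.1 hw with hw | hw
      · subst hw
        exact ⟨SimpleGraph.Walk.nil, by simp⟩
      · refine ((hconn' w hw).cons h ?_).mono (Finset.subset_insert _ _)
        rcases hv with hv | ⟨_, hv⟩
        · exact Or.inl hv
        · simp [hv] at hw

theorem path_first_hit {V : Type} [DecidableEq V] {G : SimpleGraph V} (W : Finset V) {u t : V}
    (p : G.Walk u t) (hp : p.IsPath) (ht : t ∈ W) (htu : t ≠ u) :
    ∃ (s : V) (I : Finset V), s ∈ W ∧ s ∈ p.support ∧ s ≠ u ∧ (∀ w ∈ I, w ∈ p.support) ∧ u ∉ I ∧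
      Disjoint I W ∧
      I.card + 1 ≤ p.length ∧ ConnIn G u s I ∧ (∀ w ∈ I, ConnIn G u w I) := by
  cases p with
  | nil => exact absurd rfl htu
  | cons h q =>
    rw [SimpleGraph.Walk.cons_isPath_iff] at hp
    obtain ⟨s, hs, hsq, I, hI, hd, hc, hconn, hconn', hv⟩ := walk_first_hit W q ht
    refine ⟨s, I, hs, by simp [hsq], fun e => hp.2 (e ▸ hsq), fun w hw => by simp [hI w hw],
      fun hu => hp.2 (hI u hu), hd, by simpa using hc, hconn.cons h (hv.imp_right And.left),
      fun w hw => (hconn' w hw).cons h ?_⟩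
    rcases hv with hv | ⟨_, hv⟩
    · exact Or.inl hv
    · simp [hv] at hw

theorem bad_card_le {V : Type} [Fintype V] [DecidableEq V] (G : SimpleGraph V) (r d : ℕ)
    (hr : 2 ≤ r) (hd : 1 ≤ d)
    (hminor : ¬ HasDepthTopMinorDensityGT G (r - 1) (d : ℝ)) (S T : Finset V) (hTS : T ⊆ S)
    (hT : ∀ v ∈ T, BConnGE G (S : Set V) v r (6 * r ^ 2 * d ^ 3 + 1)) : 2 * T.card ≤ S.card := by
  set K := 6 * r ^ 2 * d ^ 3 + 1 with hK
  -- a maximal family of links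
  obtain ⟨F, hFgood, hFmax⟩ : ∃ F, GoodFam G S (2 * (r - 1)) F ∧
      ∀ F', GoodFam G S (2 * (r - 1)) F' → F'.card ≤ F.card := by
    obtain ⟨F, hF, hm⟩ := Set.exists_max_image
      {F : Finset (V × V × Finset V) | GoodFam G S (2 * (r - 1)) F} Finset.card
      (Set.toFinite _) ⟨∅, by simp [GoodFam]⟩
    exact ⟨F, hF, hm⟩
  have hFc := goodFam_card_le G (r - 1) d hminor S F hFgood
  obtain ⟨R, hRT, hRind, hRc⟩ := exists_indep d F T.card T le_rfl (by
    intro A hA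
    apply goodFam_card_le G (r - 1) d hminor A
    refine ⟨fun x hx => ?_, fun x hx y hy => hFgood.2 x (Finset.mem_filter.1 hx).1 y
      (Finset.mem_filter.1 hy).1⟩
    rw [Finset.mem_filter] at hx
    obtain ⟨hx, hx1, hx2⟩ := hx
    obtain ⟨_, _, h3, h4, h5, h6⟩ := hFgood.1 x hx
    exact ⟨hx1, hx2, h3, h4, h5.mono_right (hA.trans hTS), h6⟩)
  set W := S ∪ F.biUnion (fun x => x.2.2) with hW
  have hSW : S ⊆ W := Finset.subset_union_left
  have hIW : ∀ x ∈ F, x.2.2 ⊆ W := fun x hx =>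
    (Finset.subset_biUnion_of_mem (fun x : V × V × Finset V => x.2.2) hx).trans
      Finset.subset_union_right
  have hRS : R ⊆ S := hRT.trans hTS
  have hWc : W.card ≤ S.card + F.card * (2 * (r - 1)) :=
    (Finset.card_union_le _ _).trans (Nat.add_le_add_left
      (Finset.card_biUnion_le_card_mul _ _ _ (fun x hx => (hFgood.1 x hx).2.2.2.1)) _)
  -- no further link between vertices of `R`
  have hno : ∀ u ∈ R, ∀ v ∈ R, u ≠ v → ∀ I : Finset V, I.card ≤ 2 * (r - 1) → Disjoint I W →
      ¬ ConnIn G u v I := by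
    intro u hu v hv huv I hI hd hconn
    have hnot : ∀ x ∈ F, s(x.1, x.2.1) ≠ s(u, v) := by
      intro x hx he
      have hi := hRind x hx (hFgood.1 x hx).2.2.1
      rcases Sym2.eq_iff.1 he with ⟨h1, h2⟩ | ⟨h1, h2⟩
      · exact hi (h1 ▸ hu) (h2 ▸ hv)
      · exact hi (h1 ▸ hv) (h2 ▸ hu)
    have hnF : (u, v, I) ∉ F := fun h => hnot _ h rfl
    have := hFmax (insert (u, v, I) F) (by
      refine ⟨fun x hx => ?_, fun x hx y hy hxy => ?_⟩
      · rcases Finset.mem_insert.1 hx with rfl | hx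
        · exact ⟨hRS hu, hRS hv, huv, hI, hd.mono_right hSW, hconn⟩
        · exact hFgood.1 x hx
      · rcases Finset.mem_insert.1 hx with rfl | hx
        · rcases Finset.mem_insert.1 hy with rfl | hy
          · exact absurd rfl hxy
          · exact ⟨(hnot y hy).symm, hd.mono_right (hIW y hy)⟩
        · rcases Finset.mem_insert.1 hy with rfl | hy
          · exact ⟨hnot x hx, (hd.mono_right (hIW x hx)).symm⟩
          · exact hFgood.2 x hx y hy hxy)
    rw [Finset.card_insert_of_notMem hnF] at this
    omega
  -- the short initial segments
  have hseg : ∀ v : R, ∃ (s : Fin K → V) (I : Fin K → Finset V),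
      (∀ i, s i ∈ W ∧ s i ≠ v ∧ Disjoint (I i) W ∧ (I i).card + 1 ≤ r ∧ ConnIn G v (s i) (I i) ∧
        (∀ w ∈ I i, ConnIn G v w (I i))) ∧
      (∀ i j, i ≠ j → s i ≠ s j ∧ Disjoint (I i) (I j)) := by
    intro v
    obtain ⟨t, P, hP, hPl, ht, -, hdis⟩ := hT v (hRT v.2)
    have := fun i => path_first_hit W (P i) (hP i) (hSW (Finset.mem_coe.1 (ht i).1)) (ht i).2
    choose s I h1 h2 h3 h4 h5 h6 h7 h8 h9 using this
    refine ⟨s, I, fun i => ⟨h1 i, h3 i, h6 i, (h7 i).trans (hPl i), h8 i, h9 i⟩, fun i j hij => ?_⟩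
    constructor
    · intro e
      exact h3 i (hdis i j hij _ (h2 i) (e ▸ h2 j))
    · rw [Finset.disjoint_left]
      intro w hw hw'
      exact h5 i (hdis i j hij _ (h4 i w hw) (h4 j w hw') ▸ hw)
  choose s I hsI hdis using hseg
  have hsR : ∀ v i, s v i ∉ R := by
    intro v i h
    obtain ⟨h1, h2, h3, h4, h5, h6⟩ := hsI v i
    exact hno v v.2 (s v i) h h2.symm (I v i) (by omega) h3 h5
  have hII : ∀ v v' i i', v ≠ v' → Disjoint (I v i) (I v' i') := by
    intro v v' i i' hne
    rw [Finset.disjoint_left]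
    intro w hw hw'
    obtain ⟨h1, h2, h3, h4, h5, h6⟩ := hsI v i
    obtain ⟨h1', h2', h3', h4', h5', h6'⟩ := hsI v' i'
    refine hno v v.2 v' v'.2 (fun e => hne (Subtype.ext e)) (I v i ∪ I v' i') ?_ ?_
      ((h6 w hw).trans (h6' w hw').symm (Finset.mem_union_left _ hw))
    · exact (Finset.card_union_le _ _).trans (by omega)
    · rw [Finset.disjoint_union_left]; exact ⟨h3, h3'⟩
  let g : R × Fin K → V × V × Finset V := fun y => (y.1, s y.1 y.2, I y.1 y.2)
  have hpair : ∀ y z : R × Fin K, y ≠ z →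
      s((g y).1, (g y).2.1) ≠ s((g z).1, (g z).2.1) ∧ Disjoint (g y).2.2 (g z).2.2 := by
    rintro ⟨v, i⟩ ⟨v', i'⟩ hne
    by_cases hv : v = v'
    · subst hv
      have hi : i ≠ i' := fun e => hne (by rw [e])
      refine ⟨fun e => ?_, (hdis v i i' hi).2⟩
      rcases Sym2.eq_iff.1 e with ⟨_, e⟩ | ⟨e, _⟩
      · exact (hdis v i i' hi).1 e
      · change (v : V) = s v i' at e
        exact hsR v i' (e ▸ v.2)
    · refine ⟨fun e => ?_, hII v v' i i' hv⟩
      rcases Sym2.eq_iff.1 e with ⟨e, _⟩ | ⟨e, _⟩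
      · exact hv (Subtype.ext e)
      · change (v : V) = s v' i' at e
        exact hsR v' i' (e ▸ v.2)
  have hginj : Function.Injective g := by
    intro y z h
    by_contra hne
    exact (hpair y z hne).1 (by rw [h])
  have hF2 := goodFam_card_le G (r - 1) d hminor W (Finset.univ.image g) (by
    constructor
    · intro x hx
      obtain ⟨y, -, rfl⟩ := Finset.mem_image.1 hx
      obtain ⟨h1, h2, h3, h4, h5, h6⟩ := hsI y.1 y.2
      exact ⟨hSW (hRS y.1.2), h1, h2.symm, (by show (I y.1 y.2).card ≤ _; omega), h3, h5⟩
    · intro x hx y hy hxy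
      obtain ⟨x, -, rfl⟩ := Finset.mem_image.1 hx
      obtain ⟨y, -, rfl⟩ := Finset.mem_image.1 hy
      exact hpair x y (fun e => hxy (by rw [e])))
  rw [Finset.card_image_of_injective _ hginj, Finset.card_univ, Fintype.card_prod,
    Fintype.card_coe, Fintype.card_fin] at hF2
  by_contra hcon
  push Not at hcon
  have hRpos : 0 < R.card := by
    rcases Nat.eq_zero_or_pos R.card with h | h
    · rw [h] at hRc; omega
    · exact h
  obtain ⟨q, rfl⟩ : ∃ q, r = q + 1 := ⟨r - 1, by omega⟩
  rw [Nat.add_sub_cancel] at hWc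
  have a1 : R.card * K ≤ d * (S.card * (1 + d * (2 * q))) := by
    refine hF2.trans (Nat.mul_le_mul_left _ (hWc.trans ?_))
    have := Nat.mul_le_mul_right (2 * q) hFc
    nlinarith
  have a2 : S.card ≤ 2 * ((2 * d + 1) * R.card) := by omega
  have a3 : R.card * K ≤ R.card * (2 * d * (2 * d + 1) * (1 + d * (2 * q))) := by
    refine a1.trans ?_
    have := Nat.mul_le_mul_left d (Nat.mul_le_mul_right (1 + d * (2 * q)) a2)
    refine this.trans (le_of_eq (by ring))
  have a4 := Nat.le_of_mul_le_mul_left a3 hRpos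
  have a5 : 2 * d * (2 * d + 1) * (1 + d * (2 * q)) ≤
      (2 * d * (3 * d)) * (d * (2 * (q + 1))) := by
    apply Nat.mul_le_mul
    · apply Nat.mul_le_mul_left; omega
    · nlinarith
  have a6 : (2 * d * (3 * d)) * (d * (2 * (q + 1))) ≤ 6 * (q + 1) ^ 2 * d ^ 3 := by
    have e1 : (2 * d * (3 * d)) * (d * (2 * (q + 1))) = (6 * (q + 1) * d ^ 3) * 2 := by ring
    have e2 : 6 * (q + 1) ^ 2 * d ^ 3 = (6 * (q + 1) * d ^ 3) * (q + 1) := by ring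
    rw [e1, e2]
    exact Nat.mul_le_mul_left _ hr
  omega

theorem bconn_le_of_not {V : Type} (G : SimpleGraph V) (S : Set V) (u : V) (r M : ℕ)
    (h : ¬ BConnGE G S u r (M + 1)) : bconn G S u r ≤ M := by
  apply csSup_le'
  rintro m ⟨t, P, h1, h2, h3, h4, h5⟩
  by_contra hm
  push Not at hm
  refine h ⟨fun i => t (Fin.castLE hm i), fun i => P (Fin.castLE hm i), fun i => h1 _,
    fun i => h2 _, fun i => h3 _, fun i => h4 _, fun i j hij => h5 _ _ ?_⟩
  exact fun e => hij (Fin.castLE_injective hm e)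

theorem blocks {V : Type} [Fintype V] [DecidableEq V] (G : SimpleGraph V) (r d : ℕ)
    (hr : 2 ≤ r) (hd : 1 ≤ d)
    (hminor : ¬ HasDepthTopMinorDensityGT G (r - 1) (d : ℝ)) (k : ℕ) :
    ∀ S : Finset V, S.card < 2 ^ k → ∃ (ℓ : ℕ) (β : V → ℕ), ℓ ≤ k ∧ (∀ v ∈ S, β v < ℓ) ∧
      (∀ i, i < ℓ → ∃ v ∈ S, β v = i) ∧
      (∀ v ∈ S, bconn G {u | u ∈ S ∧ β u ≤ β v} v r ≤ 6 * r ^ 2 * d ^ 3) := by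
  classical
  induction k with
  | zero =>
    intro S hS
    have : S = ∅ := Finset.card_eq_zero.1 (by simpa using hS)
    subst this
    exact ⟨0, fun _ => 0, le_rfl, by simp, by simp, by simp⟩
  | succ k ih =>
    intro S hS
    rcases S.eq_empty_or_nonempty with rfl | hne
    · exact ⟨0, fun _ => 0, by omega, by simp, by simp, by simp⟩
    set T := S.filter (fun v => BConnGE G (S : Set V) v r (6 * r ^ 2 * d ^ 3 + 1)) with hTdef
    have hTS : T ⊆ S := Finset.filter_subset _ _
    have hTc := bad_card_le G r d hr hd hminor S T hTS (fun v hv => (Finset.mem_filter.1 hv).2)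
    obtain ⟨ℓ, β, h1, h2, h3, h4⟩ := ih T (by rw [pow_succ] at hS; omega)
    have hpos := Finset.card_pos.2 hne
    obtain ⟨z, hzS, hzT⟩ := Finset.exists_mem_notMem_of_card_lt_card (s := T) (t := S) (by omega)
    refine ⟨ℓ + 1, fun v => if v ∈ T then β v else ℓ, by omega, ?_, ?_, ?_⟩
    · intro v _
      by_cases hv : v ∈ T
      · simp only [hv, if_true]; exact (h2 v hv).trans (Nat.lt_succ_self _)
      · simp [hv]
    · intro i hi
      by_cases hiℓ : i < ℓ
      · obtain ⟨v, hv, e⟩ := h3 i hiℓ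
        exact ⟨v, hTS hv, by simp [hv, e]⟩
      · exact ⟨z, hzS, by simp only [hzT, if_false]; omega⟩
    · intro v hvS
      by_cases hv : v ∈ T
      · have e : {u | u ∈ S ∧ (if u ∈ T then β u else ℓ) ≤ (if v ∈ T then β v else ℓ)} =
            {u | u ∈ T ∧ β u ≤ β v} := by
          ext u
          simp only [Set.mem_ofPred_eq, hv, if_true]
          by_cases hu : u ∈ T
          · simp [hu, hTS hu]
          · have := h2 v hv
            simp only [hu, if_false, false_and, iff_false, not_and]
            omega
        rw [e]
        exact h4 v hv
      · have e : {u | u ∈ S ∧ (if u ∈ T then β u else ℓ) ≤ (if v ∈ T then β v else ℓ)} =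
            (S : Set V) := by
          ext u
          simp only [Set.mem_ofPred_eq, hv, if_false, Finset.mem_coe]
          refine ⟨fun h => h.1, fun h => ⟨h, ?_⟩⟩
          split_ifs with hu
          · exact (h2 u hu).le
          · exact le_rfl
        rw [e]
        exact bconn_le_of_not _ _ _ _ _ (fun hb => hv (Finset.mem_filter.2 ⟨hvS, hb⟩))

/-- If every depth-`(r−1)` topological minor of `G` (a graph on `n ≥ 1` vertices) has edge
density at most `d`, where `r ≥ 2` and `d ≥ 1`, then `G` admits a block vertex ordering
(an ordered partition into `ℓ` nonempty blocks, represented by the block-index function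
`β : V → ℕ`) of `r`-admissibility at most `6r²d³` (for every vertex `v`,
`bconn_r(B_1 ∪ … ∪ B_i, v) ≤ 6r²d³` where `B_i` is the block of `v`) and length at most
`⌊log₂ n⌋ + 1`. -/
theorem stmt5 {V : Type} [Fintype V] (G : SimpleGraph V) (n r d : ℕ)
    (hn : n = Fintype.card V) (hpos : 1 ≤ n) (hr : 2 ≤ r) (hd : 1 ≤ d)
    (hminor : ¬ HasDepthTopMinorDensityGT G (r - 1) (d : ℝ)) :
    ∃ (ℓ : ℕ) (β : V → ℕ),
      ℓ ≤ Nat.log 2 n + 1 ∧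
      (∀ v, β v < ℓ) ∧
      (∀ i, i < ℓ → ∃ v, β v = i) ∧
      (∀ v : V, bconn G {u | β u ≤ β v} v r ≤ 6 * r ^ 2 * d ^ 3) := by
  classical
  obtain ⟨ℓ, β, h1, h2, h3, h4⟩ := blocks G r d hr hd hminor (Nat.log 2 n + 1) Finset.univ
    (by rw [Finset.card_univ, ← hn]; exact Nat.lt_pow_succ_log_self (by norm_num) n)
  refine ⟨ℓ, β, h1, fun v => h2 v (Finset.mem_univ v), fun i hi => ?_, fun v => ?_⟩
  · obtain ⟨v, -, hv⟩ := h3 i hi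
    exact ⟨v, hv⟩
  · have := h4 v (Finset.mem_univ v)
    simpa using this
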